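/- Let P be a Gorenstein polytope that is a Cayley join of lattice polytopes F and G with codeg(F) + codeg(G) = codeg(P). Then F and G are themselves Gorenstein polytopes. -/

import Mathlib

open Pointwise

/-- A point of `ℝ^d` is a lattice point if all its coordinates are integers. -/
def IsLatticePt {d : ℕ} (x : Fin d → ℝ) : Prop := ∀ i, ∃ z : ℤ, x i = (z : ℝ)

/-- A lattice polytope is the (non-empty) convex hull of finitely many lattice points. -/
def IsLatticePolytope {d : ℕ} (P : Set (Fin d → ℝ)) : Prop :=
  ∃ V : Finset (Fin d → ℝ), V.Nonempty ∧ (∀ v ∈ V, IsLatticePt v) ∧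
    P = convexHull ℝ (V : Set (Fin d → ℝ))

/-- The dimension of a polytope: the dimension of the direction of its affine hull. -/
noncomputable def polyDim {d : ℕ} (P : Set (Fin d → ℝ)) : ℕ :=
  Module.finrank ℝ (affineSpan ℝ P).direction

/-- A polytope is hollow if its relative interior contains no lattice point. -/
def IsHollow {d : ℕ} (P : Set (Fin d → ℝ)) : Prop :=
  ∀ x ∈ intrinsicInterior ℝ P, ¬ IsLatticePt x

/-- A facet of `P`: a non-empty exposed face of dimension `dim P - 1`. -/
def IsFacet {d : ℕ} (P F : Set (Fin d → ℝ)) : Prop :=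
  IsExposed ℝ P F ∧ F.Nonempty ∧ polyDim F + 1 = polyDim P

/-- An affine functional is integral on `P` if it takes integer values on all
lattice points of the affine hull of `P`. -/
def IsIntegralOn {d : ℕ} (P : Set (Fin d → ℝ)) (u : (Fin d → ℝ) →ᵃ[ℝ] ℝ) : Prop :=
  ∀ y ∈ affineSpan ℝ P, IsLatticePt y → ∃ z : ℤ, u y = (z : ℝ)

/-- `P` is reflexive: there is a lattice point `x` in the relative interior of `P`
such that every facet of `P` has lattice distance one from `x`, i.e. for every facet `F`
there is an integral affine functional that is constant on `F` and exceeds its value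
at `x` by exactly `1`. -/
def IsReflexivePolytope {d : ℕ} (P : Set (Fin d → ℝ)) : Prop :=
  ∃ x ∈ intrinsicInterior ℝ P, IsLatticePt x ∧
    ∀ F : Set (Fin d → ℝ), IsFacet P F →
      ∃ u : (Fin d → ℝ) →ᵃ[ℝ] ℝ, IsIntegralOn P u ∧ ∀ f ∈ F, u f = u x + 1

/-- `P` is Gorenstein if some positive integer multiple `r • P` is reflexive. -/
def IsGorenstein {d : ℕ} (P : Set (Fin d → ℝ)) : Prop :=
  ∃ r : ℕ, 0 < r ∧ IsReflexivePolytope ((r : ℝ) • P)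

/-- `P` is Gorenstein of codegree `r` if `r • P` is reflexive (`r` positive). -/
def IsGorensteinOfCodeg {d : ℕ} (P : Set (Fin d → ℝ)) (r : ℕ) : Prop :=
  0 < r ∧ IsReflexivePolytope ((r : ℝ) • P)

/-- The codegree of `P`: the smallest positive integer `r` such that `r • P` is not hollow. -/
noncomputable def polyCodeg {d : ℕ} (P : Set (Fin d → ℝ)) : ℕ :=
  sInf {r : ℕ | 0 < r ∧ ¬ IsHollow ((r : ℝ) • P)}

/-- The degree of `P`: `dim P + 1 - codeg P`. -/
noncomputable def polyDeg {d : ℕ} (P : Set (Fin d → ℝ)) : ℕ :=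
  polyDim P + 1 - polyCodeg P

/-- Unimodular equivalence of lattice polytopes: an affine map carrying `P` onto `Q`,
with an affine inverse on affine hulls, such that both maps preserve lattice points of
the affine hulls. -/
def LatticeIso {d e : ℕ} (P : Set (Fin d → ℝ)) (Q : Set (Fin e → ℝ)) : Prop :=
  ∃ (f : (Fin d → ℝ) →ᵃ[ℝ] (Fin e → ℝ)) (g : (Fin e → ℝ) →ᵃ[ℝ] (Fin d → ℝ)),
    f '' P = Q ∧ g '' Q = P ∧
    (∀ x ∈ affineSpan ℝ P, g (f x) = x) ∧ (∀ y ∈ affineSpan ℝ Q, f (g y) = y) ∧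
    (∀ x ∈ affineSpan ℝ P, IsLatticePt x → IsLatticePt (f x)) ∧
    (∀ y ∈ affineSpan ℝ Q, IsLatticePt y → IsLatticePt (g y))

/-- The lattice pyramid `conv(P' × {0}, (0,1))` over `P' ⊆ ℝ^m`. -/
def pyramidOver {m : ℕ} (P' : Set (Fin m → ℝ)) : Set (Fin (m + 1) → ℝ) :=
  convexHull ℝ ((fun x => Fin.snoc x (0 : ℝ)) '' P' ∪ {Fin.snoc (0 : Fin m → ℝ) (1 : ℝ)})

/-- `P` is a lattice pyramid if it is a single lattice point or is isomorphic to a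
lattice pyramid over a lattice polytope. -/
def IsLatticePyramid {d : ℕ} (P : Set (Fin d → ℝ)) : Prop :=
  (∃ x : Fin d → ℝ, IsLatticePt x ∧ P = {x}) ∨
  ∃ (m : ℕ) (P' : Set (Fin m → ℝ)), IsLatticePolytope P' ∧ LatticeIso P (pyramidOver P')

/-- The Cayley polytope `P_1 * ⋯ * P_l ⊆ ℝ^{n+l}` of `P_1, …, P_l ⊆ ℝ^n`:
the convex hull of the sets `P_i × {e_i}`. -/
def cayley {n l : ℕ} (P : Fin l → Set (Fin n → ℝ)) : Set (Fin (n + l) → ℝ) :=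
  convexHull ℝ (⋃ i : Fin l, (fun x => Fin.append x (Pi.single i (1 : ℝ))) '' P i)

/-- The Cayley polytope `F * G ⊆ ℝ^{n+2}` of two polytopes `F, G ⊆ ℝ^n`. -/
def cayleyTwo {n : ℕ} (F G : Set (Fin n → ℝ)) : Set (Fin (n + 2) → ℝ) :=
  convexHull ℝ
    ((fun x => Fin.append x ![(1 : ℝ), 0]) '' F ∪ (fun x => Fin.append x ![(0 : ℝ), 1]) '' G)

/-- `P` is a Cayley join of `F` and `G` if `P ≅ F * G` and `dim F + dim G = dim P - 1`. -/
def IsCayleyJoin {d n : ℕ} (P : Set (Fin d → ℝ)) (F G : Set (Fin n → ℝ)) : Prop :=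
  LatticeIso P (cayleyTwo F G) ∧ polyDim F + polyDim G + 1 = polyDim P

/-- `P` is reducible with factors `F` and `G`: a Cayley join with
`codeg F + codeg G = codeg P`. -/
def IsReducibleWith {d n : ℕ} (P : Set (Fin d → ℝ)) (F G : Set (Fin n → ℝ)) : Prop :=
  IsCayleyJoin P F G ∧ polyCodeg F + polyCodeg G = polyCodeg P

/-- `P` is reducible: it is a single lattice point (by convention) or is reducible
with some factors `F` and `G` which are lattice polytopes. -/
def IsReducible {d : ℕ} (P : Set (Fin d → ℝ)) : Prop :=
  (∃ x : Fin d → ℝ, IsLatticePt x ∧ P = {x}) ∨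
  ∃ (n : ℕ) (F G : Set (Fin n → ℝ)), IsLatticePolytope F ∧ IsLatticePolytope G ∧
    IsReducibleWith P F G

/-- `P` is a Cayley polytope: a single lattice point, or isomorphic to a Cayley polytope
of `l > 1` lattice polytopes. -/
def IsCayleyPolytope {d : ℕ} (P : Set (Fin d → ℝ)) : Prop :=
  (∃ x : Fin d → ℝ, IsLatticePt x ∧ P = {x}) ∨
  ∃ (n l : ℕ) (Q : Fin l → Set (Fin n → ℝ)), 1 < l ∧ (∀ i, IsLatticePolytope (Q i)) ∧
    LatticeIso P (cayley Q)

/-- `P` is IDP if for every `k ≥ 2` every lattice point of `k • P` is a sum of `k`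
lattice points of `P`. -/
def IsIDP {d : ℕ} (P : Set (Fin d → ℝ)) : Prop :=
  ∀ k : ℕ, 2 ≤ k → ∀ x : Fin d → ℝ, IsLatticePt x → x ∈ (k : ℝ) • P →
    ∃ p : Fin k → (Fin d → ℝ), (∀ i, p i ∈ P ∧ IsLatticePt (p i)) ∧ x = ∑ i, p i

/-- The standard simplex `Δ_s = conv(0, e_1, …, e_s) ⊆ ℝ^s`. -/
def stdSimplexLP (s : ℕ) : Set (Fin s → ℝ) :=
  convexHull ℝ (insert 0 (Set.range fun i : Fin s => Pi.single i (1 : ℝ)))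

/-- The product of `F ⊆ ℝ^m` and `G ⊆ ℝ^n` inside `ℝ^{m+n}`. -/
def prodPoly {m n : ℕ} (F : Set (Fin m → ℝ)) (G : Set (Fin n → ℝ)) : Set (Fin (m + n) → ℝ) :=
  (fun p : (Fin m → ℝ) × (Fin n → ℝ) => Fin.append p.1 p.2) '' (F ×ˢ G)

/-- The free join `conv(F × 0 × {0} ∪ 0 × G × {1}) ⊆ ℝ^m × ℝ^n × ℝ`. -/
def freeJoin {m n : ℕ} (F : Set (Fin m → ℝ)) (G : Set (Fin n → ℝ)) :
    Set (Fin (m + n + 1) → ℝ) :=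
  convexHull ℝ
    ((fun x => Fin.snoc (Fin.append x (0 : Fin n → ℝ)) (0 : ℝ)) '' F ∪
     (fun y => Fin.snoc (Fin.append (0 : Fin m → ℝ) y) (1 : ℝ)) '' G)

/-!
Interior lattice points `y` of `codeg(F) F` and `z` of `codeg(G) G` add up to an interior lattice
point of `codeg(P) P`. If `r P` is reflexive with distinguished point `x` and `w` is an interior
point of `P` with `c w` a lattice point for some `0 < c ≤ r`, then no facet functional of `r P` is
larger at `x` than at `c w + (r - c) v`, `v` a vertex on the facet; this forces `c = r` and
`x = c w`. So `codeg(P) P` is reflexive with distinguished point `y + z`. Each facet of `F` spans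
together with `G` a facet of `P` because the dimensions of `F` and `G` add up, and the functional
witnessing that `y + z` has lattice distance one from this facet, translated by `z`, does the same
for `y` and the facet of `F`.
-/

section SegmentExtension

variable {E : Type*} [AddCommGroup E] [Module ℝ E] {S : Set E} {x p q : E}

theorem add_smul_sub_mem_of_le (hS : Convex ℝ S) (hx : x ∈ S) {s : E} {t t' : ℝ} (ht' : 0 ≤ t')
    (htt' : t' ≤ t) (hmem : x + t • (x - s) ∈ S) : x + t' • (x - s) ∈ S := by
  rcases ht'.eq_or_lt with rfl | hpos
  · simpa using hx
  have ht : 0 < t := hpos.trans_le htt'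
  have := hS.add_smul_mem hx hmem (t := t' / t) ⟨by positivity, (div_le_one ht).2 htt'⟩
  rwa [smul_smul, div_mul_cancel₀ _ ht.ne'] at this

theorem convex_setOf_exists_pos_add_smul_sub_mem (hS : Convex ℝ S) (hx : x ∈ S) :
    Convex ℝ {s | ∃ t : ℝ, 0 < t ∧ x + t • (x - s) ∈ S} := by
  rintro s ⟨t, ht, hs⟩ s' ⟨t', ht', hs'⟩ a b ha hb hab
  have hmin : 0 < min t t' := lt_min ht ht'
  refine ⟨min t t', hmin, ?_⟩
  have hcomb := hS (add_smul_sub_mem_of_le hS hx hmin.le (min_le_left t t') hs)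
    (add_smul_sub_mem_of_le hS hx hmin.le (min_le_right t t') hs') ha hb hab
  convert hcomb using 1
  obtain rfl : b = 1 - a := by linarith
  module

theorem exists_pos_add_smul_sub_mem_of_combo (hS : Convex ℝ S) (hp : p ∈ S) (hq : q ∈ S) {a b : ℝ}
    (ha : 0 < a) (hb : 0 ≤ b) (hab : a + b = 1) {s : E}
    (hs : ∃ t : ℝ, 0 < t ∧ p + t • (p - s) ∈ S) :
    ∃ t : ℝ, 0 < t ∧ a • p + b • q + t • (a • p + b • q - s) ∈ S := by
  obtain ⟨t, ht, hmem⟩ := hs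
  obtain rfl : b = 1 - a := by linarith
  have hd : 0 < 1 + t - a := by linarith
  have hw : (a ^ 2 * t / (1 + t - a)) • p + ((1 + t + a * t) * (1 - a) / (1 + t - a)) • q ∈ S :=
    hS hp hq (by positivity) (by positivity) (by field_simp; ring)
  refine ⟨a * t / (1 + t), by positivity, ?_⟩
  convert hS hmem hw (a := a / (1 + t)) (b := (1 + t - a) / (1 + t)) (by positivity)
    (by positivity) (by field_simp; ring) using 1
  match_scalars <;> field_simp

end SegmentExtension

section RelativeInterior

variable {E E' : Type*} [NormedAddCommGroup E] [NormedSpace ℝ E]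
  [NormedAddCommGroup E'] [NormedSpace ℝ E'] {S A B : Set E} {x y z p q : E}

theorem mem_intrinsicInterior_iff_mem_nhdsWithin :
    x ∈ intrinsicInterior ℝ S ↔ x ∈ affineSpan ℝ S ∧ S ∈ nhdsWithin x (affineSpan ℝ S) := by
  rw [mem_intrinsicInterior]
  constructor
  · rintro ⟨y, hy, rfl⟩
    exact ⟨y.2, preimage_coe_mem_nhds_subtype.1 (mem_interior_iff_mem_nhds.1 hy)⟩
  · rintro ⟨hx, hS⟩
    exact ⟨⟨x, hx⟩, mem_interior_iff_mem_nhds.2 (preimage_coe_mem_nhds_subtype.2 hS), rfl⟩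

theorem exists_pos_add_smul_sub_mem_of_mem_intrinsicInterior (hx : x ∈ intrinsicInterior ℝ S)
    {s : E} (hs : s ∈ S) : ∃ t : ℝ, 0 < t ∧ x + t • (x - s) ∈ S := by
  obtain ⟨hxS, hnhds⟩ := mem_intrinsicInterior_iff_mem_nhdsWithin.1 hx
  have hcont : Filter.Tendsto (fun t : ℝ => x + t • (x - s)) (nhdsWithin 0 (Set.Ioi 0))
      (nhdsWithin x (affineSpan ℝ S)) := by
    refine tendsto_nhdsWithin_iff.2 ⟨?_, .of_forall fun t => ?_⟩
    · have : Continuous fun t : ℝ => x + t • (x - s) := by fun_prop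
      simpa using (this.tendsto 0).mono_left nhdsWithin_le_nhds
    · have hmem := AffineMap.lineMap_mem (-t) hxS (subset_affineSpan ℝ S hs)
      rwa [show AffineMap.lineMap x s (-t) = x + t • (x - s) by
        rw [AffineMap.lineMap_apply, vsub_eq_sub, vadd_eq_add]; module] at hmem
  obtain ⟨t, htS, ht⟩ := ((hcont.eventually hnhds).and self_mem_nhdsWithin).exists
  exact ⟨t, ht, htS⟩

/- `x` lies on an open segment from a relative interior point `p` to a point `q` of `S`, and the
homothety of centre `q` taking `x` to `p` pulls a neighbourhood of `p` back into `S`. -/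
theorem mem_intrinsicInterior_iff_forall_exists_add_smul_sub_mem [FiniteDimensional ℝ E]
    (hS : Convex ℝ S) : x ∈ intrinsicInterior ℝ S ↔
      x ∈ S ∧ ∀ s ∈ S, ∃ t : ℝ, 0 < t ∧ x + t • (x - s) ∈ S := by
  refine ⟨fun hx => ⟨intrinsicInterior_subset hx, fun s hs =>
    exists_pos_add_smul_sub_mem_of_mem_intrinsicInterior hx hs⟩, ?_⟩
  rintro ⟨hxS, hext⟩
  obtain ⟨p, hp⟩ := Set.Nonempty.intrinsicInterior hS ⟨x, hxS⟩
  obtain ⟨t, ht, hq⟩ := hext p (intrinsicInterior_subset hp)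
  set q := x + t • (x - p) with hqdef
  obtain ⟨-, hpn⟩ := mem_intrinsicInterior_iff_mem_nhdsWithin.1 hp
  have hqaff := subset_affineSpan ℝ S hq
  have hxp : AffineMap.homothety q ((1 + t) / t) x = p := by
    rw [AffineMap.homothety_apply, vsub_eq_sub, vadd_eq_add, hqdef]
    match_scalars <;> field_simp <;> ring
  have htend : Filter.Tendsto (AffineMap.homothety q ((1 + t) / t))
      (nhdsWithin x (affineSpan ℝ S)) (nhdsWithin p (affineSpan ℝ S)) := by
    refine tendsto_nhdsWithin_iff.2 ⟨?_, ?_⟩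
    · rw [← hxp]
      exact ((AffineMap.homothety_continuous q _).tendsto x).mono_left nhdsWithin_le_nhds
    · filter_upwards [self_mem_nhdsWithin] with y hy
      simpa [AffineMap.homothety_eq_lineMap] using AffineMap.lineMap_mem ((1 + t) / t) hqaff hy
  refine mem_intrinsicInterior_iff_mem_nhdsWithin.2 ⟨subset_affineSpan ℝ S hxS, ?_⟩
  filter_upwards [htend hpn] with y hy
  have hcomb := hS hq hy (a := 1 / (1 + t)) (b := t / (1 + t)) (by positivity) (by positivity)
    (by field_simp)
  convert hcomb using 1
  rw [AffineMap.homothety_apply, vsub_eq_sub, vadd_eq_add]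
  match_scalars <;> field_simp <;> ring

theorem affineMap_image_mem_intrinsicInterior [FiniteDimensional ℝ E] [FiniteDimensional ℝ E']
    (hS : Convex ℝ S) (f : E →ᵃ[ℝ] E') (hx : x ∈ intrinsicInterior ℝ S) :
    f x ∈ intrinsicInterior ℝ (f '' S) := by
  rw [mem_intrinsicInterior_iff_forall_exists_add_smul_sub_mem hS] at hx
  rw [mem_intrinsicInterior_iff_forall_exists_add_smul_sub_mem (hS.affine_image f)]
  refine ⟨Set.mem_image_of_mem f hx.1, ?_⟩
  rintro _ ⟨s, hs, rfl⟩
  obtain ⟨t, ht, hmem⟩ := hx.2 s hs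
  refine ⟨t, ht, x + t • (x - s), hmem, ?_⟩
  rw [add_comm x, ← vadd_eq_add, f.map_vadd, map_smul, ← vsub_eq_sub, f.linearMap_vsub,
    vadd_eq_add, vsub_eq_sub, add_comm]

theorem smul_mem_intrinsicInterior_smul [FiniteDimensional ℝ E] (hS : Convex ℝ S) (r : ℝ)
    (hx : x ∈ intrinsicInterior ℝ S) : r • x ∈ intrinsicInterior ℝ (r • S) := by
  simpa [Set.image_smul] using
    affineMap_image_mem_intrinsicInterior hS (r • LinearMap.id (R := ℝ) (M := E)).toAffineMap hx

theorem eq_zero_of_nonneg_of_mem_intrinsicInterior {φ : E →ᵃ[ℝ] ℝ} (hφ : ∀ s ∈ S, 0 ≤ φ s)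
    (hx : x ∈ intrinsicInterior ℝ S) (hx0 : φ x = 0) {s : E} (hs : s ∈ S) : φ s = 0 := by
  obtain ⟨t, ht, hmem⟩ := exists_pos_add_smul_sub_mem_of_mem_intrinsicInterior hx hs
  have hval : φ (x + t • (x - s)) = -(t * φ s) := by
    rw [add_comm x, ← vadd_eq_add, φ.map_vadd, map_smul, ← vsub_eq_sub, φ.linearMap_vsub, hx0]
    simp
  nlinarith [hφ s hs, hφ _ hmem]

theorem combo_mem_intrinsicInterior_convexHull_union [FiniteDimensional ℝ E]
    (hp : p ∈ intrinsicInterior ℝ A) (hq : q ∈ intrinsicInterior ℝ B) {a b : ℝ} (ha : 0 < a)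
    (hb : 0 < b) (hab : a + b = 1) :
    a • p + b • q ∈ intrinsicInterior ℝ (convexHull ℝ (A ∪ B)) := by
  set C := convexHull ℝ (A ∪ B)
  have hC : Convex ℝ C := convex_convexHull ℝ _
  have hA : A ⊆ C := Set.subset_union_left.trans (subset_convexHull ℝ _)
  have hB : B ⊆ C := Set.subset_union_right.trans (subset_convexHull ℝ _)
  have hpC : p ∈ C := hA (intrinsicInterior_subset hp)
  have hqC : q ∈ C := hB (intrinsicInterior_subset hq)
  have hx : a • p + b • q ∈ C := hC hpC hqC ha.le hb.le hab
  refine (mem_intrinsicInterior_iff_forall_exists_add_smul_sub_mem hC).2 ⟨hx,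
    convexHull_min (Set.union_subset (fun s hs => ?_) fun s hs => ?_)
      (convex_setOf_exists_pos_add_smul_sub_mem hC hx)⟩
  · obtain ⟨t, ht, hmem⟩ := exists_pos_add_smul_sub_mem_of_mem_intrinsicInterior hp hs
    exact exists_pos_add_smul_sub_mem_of_combo hC hpC hqC ha hb.le hab ⟨t, ht, hA hmem⟩
  · obtain ⟨t, ht, hmem⟩ := exists_pos_add_smul_sub_mem_of_mem_intrinsicInterior hq hs
    rw [add_comm (a • p)]
    exact exists_pos_add_smul_sub_mem_of_combo hC hqC hpC hb ha.le (by rw [add_comm, hab])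
        ⟨t, ht, hB hmem⟩

theorem add_mem_intrinsicInterior_smul_convexHull_union [FiniteDimensional ℝ E]
    (hA : Convex ℝ A) (hB : Convex ℝ B) {a b : ℝ} (ha : 0 < a) (hb : 0 < b)
    (hy : y ∈ intrinsicInterior ℝ (a • A)) (hz : z ∈ intrinsicInterior ℝ (b • B)) :
    y + z ∈ intrinsicInterior ℝ ((a + b) • convexHull ℝ (A ∪ B)) := by
  have hp := smul_mem_intrinsicInterior_smul (hA.smul a) a⁻¹ hy
  have hq := smul_mem_intrinsicInterior_smul (hB.smul b) b⁻¹ hz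
  rw [inv_smul_smul₀ ha.ne'] at hp
  rw [inv_smul_smul₀ hb.ne'] at hq
  have hab : 0 < a + b := add_pos ha hb
  have hmem := smul_mem_intrinsicInterior_smul (convex_convexHull ℝ _) (a + b)
    (combo_mem_intrinsicInterior_convexHull_union hp hq (div_pos ha hab) (div_pos hb hab)
      (by rw [← add_div, div_self hab.ne']))
  convert hmem using 1
  match_scalars <;> field_simp

end RelativeInterior

section LatticePoints

variable {d : ℕ} {x y : Fin d → ℝ} {P : Set (Fin d → ℝ)}

theorem IsLatticePt.add (hx : IsLatticePt x) (hy : IsLatticePt y) : IsLatticePt (x + y) := fun i =>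
  let ⟨m, hm⟩ := hx i
  let ⟨n, hn⟩ := hy i
  ⟨m + n, by rw [Pi.add_apply, hm, hn, Int.cast_add]⟩

theorem IsLatticePt.sub (hx : IsLatticePt x) (hy : IsLatticePt y) : IsLatticePt (x - y) := fun i =>
  let ⟨m, hm⟩ := hx i
  let ⟨n, hn⟩ := hy i
  ⟨m - n, by rw [Pi.sub_apply, hm, hn, Int.cast_sub]⟩

theorem IsLatticePt.natCast_smul (hx : IsLatticePt x) (k : ℕ) : IsLatticePt ((k : ℝ) • x) :=
  fun i =>
  let ⟨m, hm⟩ := hx i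
  ⟨k * m, by rw [Pi.smul_apply, hm, smul_eq_mul]; norm_cast⟩

theorem IsLatticePolytope.convex (hP : IsLatticePolytope P) : Convex ℝ P := by
  obtain ⟨V, -, -, rfl⟩ := hP
  exact convex_convexHull ℝ _

theorem IsLatticePolytope.exists_isLatticePt (hP : IsLatticePolytope P) :
    ∃ v ∈ P, IsLatticePt v := by
  obtain ⟨V, ⟨v, hv⟩, hlat, rfl⟩ := hP
  exact ⟨v, subset_convexHull ℝ _ hv, hlat v hv⟩

theorem IsLatticePolytope.convexHull_union {Q : Set (Fin d → ℝ)} (hP : IsLatticePolytope P)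
    (hQ : IsLatticePolytope Q) : IsLatticePolytope (convexHull ℝ (P ∪ Q)) := by
  classical
  obtain ⟨V, hV, hVlat, rfl⟩ := hP
  obtain ⟨W, -, hWlat, rfl⟩ := hQ
  refine ⟨V ∪ W, hV.inl, fun v hv => (Finset.mem_union.1 hv).elim (hVlat v) (hWlat v), ?_⟩
  rw [convexHull_convexHull_union_left, convexHull_convexHull_union_right, Finset.coe_union]

theorem IsLatticePolytope.natCast_smul (hP : IsLatticePolytope P) (k : ℕ) :
    IsLatticePolytope ((k : ℝ) • P) := by
  classical
  obtain ⟨V, hV, hlat, rfl⟩ := hP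
  refine ⟨(k : ℝ) • V, hV.smul_finset, fun w hw => ?_, ?_⟩
  · obtain ⟨v, hv, rfl⟩ := Finset.mem_smul_finset.1 hw
    exact (hlat v hv).natCast_smul k
  · rw [Finset.coe_smul_finset, convexHull_smul]

/- The lattice point is the sum of the vertices, in the dilation by their number. -/
theorem IsLatticePolytope.exists_isLatticePt_mem_intrinsicInterior_smul
    (hP : IsLatticePolytope P) :
    ∃ k : ℕ, 0 < k ∧ ∃ y ∈ intrinsicInterior ℝ ((k : ℝ) • P), IsLatticePt y := by
  obtain ⟨V, hV, hlat, rfl⟩ := hP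
  induction hV using Finset.Nonempty.cons_induction with
  | singleton v => exact ⟨1, one_pos, v, by simp, hlat v (Finset.mem_singleton_self v)⟩
  | cons v W hv _ ih =>
    obtain ⟨k, hk, y, hy, hylat⟩ := ih fun w hw => hlat w (Finset.mem_cons_of_mem hw)
    refine ⟨1 + k, by omega, v + y, ?_, (hlat v (Finset.mem_cons_self v W)).add hylat⟩
    have hmem := add_mem_intrinsicInterior_smul_convexHull_union (convex_singleton v)
      (convex_convexHull ℝ (W : Set (Fin d → ℝ))) one_pos (Nat.cast_pos.2 hk)
      (y := v) (by simp) hy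
    rwa [convexHull_convexHull_union_right, Set.singleton_union, ← Finset.coe_cons (h := hv),
      ← Nat.cast_one, ← Nat.cast_add] at hmem

theorem IsLatticePolytope.polyCodeg_spec (hP : IsLatticePolytope P) : 0 < polyCodeg P ∧
    ∃ y ∈ intrinsicInterior ℝ ((polyCodeg P : ℝ) • P), IsLatticePt y := by
  obtain ⟨k, hk, y, hy, hylat⟩ := hP.exists_isLatticePt_mem_intrinsicInterior_smul
  have hmem : 0 < polyCodeg P ∧ ¬ IsHollow ((polyCodeg P : ℝ) • P) :=
    Nat.sInf_mem (s := {r : ℕ | 0 < r ∧ ¬ IsHollow ((r : ℝ) • P)})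
      ⟨k, hk, fun h => h y hy hylat⟩
  exact ⟨hmem.1, by simpa only [IsHollow, not_forall, not_not, exists_prop] using hmem.2⟩

end LatticePoints

section LinearAlgebra

variable {E E' : Type*} [AddCommGroup E] [Module ℝ E] [AddCommGroup E'] [Module ℝ E']

theorem affineMap_linear_sub (φ : E →ᵃ[ℝ] ℝ) (x y : E) : φ.linear (x - y) = φ x - φ y :=
  φ.linearMap_vsub x y

theorem vectorSpan_convexHull (S : Set E) :
    vectorSpan ℝ (convexHull ℝ S) = vectorSpan ℝ S := by
  rw [← direction_affineSpan, affineSpan_convexHull, direction_affineSpan]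

theorem nonneg_of_mem_convexHull {S : Set E} {φ : E →ᵃ[ℝ] ℝ} (hφ : ∀ s ∈ S, 0 ≤ φ s) :
    ∀ p ∈ convexHull ℝ S, 0 ≤ φ p :=
  convexHull_min hφ ((convex_Ici (0 : ℝ)).affine_preimage φ)

theorem map_mem_affineSpan_image (f : E →ᵃ[ℝ] E') {S : Set E} {x : E}
    (hx : x ∈ affineSpan ℝ S) : f x ∈ affineSpan ℝ (f '' S) := by
  rw [← AffineSubspace.map_span]
  exact AffineSubspace.mem_map_of_mem f hx

theorem finrank_inf_ker_add_one {K V : Type*} [Field K] [AddCommGroup V] [Module K V]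
    [FiniteDimensional K V] {W : Submodule K V} {l : V →ₗ[K] K} {w : V} (hw : w ∈ W)
    (hlw : l w ≠ 0) :
    Module.finrank K ↥(W ⊓ LinearMap.ker l) + 1 = Module.finrank K W := by
  have hrange : LinearMap.range (l.domRestrict W) = ⊤ :=
    LinearMap.range_eq_top.2 <| LinearMap.surjective fun h =>
      hlw (by simpa using LinearMap.congr_fun h ⟨w, hw⟩)
  have hker : Module.finrank K (LinearMap.ker (l.domRestrict W)) =
      Module.finrank K ↥(W ⊓ LinearMap.ker l) := by
    rw [LinearMap.ker_domRestrict, ← Submodule.finrank_map_subtype_eq, Submodule.map_comap_subtype]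
  rw [← hker, ← (l.domRestrict W).finrank_range_add_finrank_ker, hrange, finrank_top,
    Module.finrank_self, add_comm]

theorem exists_add_mul_nonneg_and_eq_zero {ι K : Type*} [Field K] [LinearOrder K]
    [IsStrictOrderedRing K] {s : Finset ι} {f g : ι → K} (hf : ∀ i ∈ s, 0 ≤ f i)
    (hg : ∃ i ∈ s, g i < 0) :
    ∃ t : K, (∀ i ∈ s, 0 ≤ f i + t * g i) ∧ ∃ i ∈ s, g i < 0 ∧ f i + t * g i = 0 := by
  obtain ⟨i, hi, hmin⟩ := (s.filter (g · < 0)).exists_min_image (fun i => f i / -g i)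
    (by simpa [Finset.Nonempty] using hg)
  obtain ⟨his, hgi⟩ := Finset.mem_filter.1 hi
  refine ⟨f i / -g i, fun j hj => ?_, i, his, hgi, by field_simp [hgi.ne]; ring⟩
  rcases lt_or_ge (g j) 0 with hgj | hgj
  · have := (le_div_iff₀ (neg_pos.2 hgj)).1 (hmin j (Finset.mem_filter.2 ⟨hj, hgj⟩))
    linarith
  · exact add_nonneg (hf j hj) (mul_nonneg (div_nonneg (hf i his) (neg_pos.2 hgi).le) hgj)

end LinearAlgebra

section Faces

variable {d e : ℕ} {P F S : Set (Fin d → ℝ)} {φ : (Fin d → ℝ) →ᵃ[ℝ] ℝ}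

theorem polyDim_eq_finrank_vectorSpan (S : Set (Fin d → ℝ)) :
    polyDim S = Module.finrank ℝ (vectorSpan ℝ S) := by
  rw [polyDim, direction_affineSpan]

theorem polyDim_convexHull (S : Set (Fin d → ℝ)) : polyDim (convexHull ℝ S) = polyDim S := by
  rw [polyDim, polyDim, affineSpan_convexHull]

theorem polyDim_image_le (f : (Fin d → ℝ) →ᵃ[ℝ] (Fin e → ℝ)) (S : Set (Fin d → ℝ)) :
    polyDim (f '' S) ≤ polyDim S := by
  rw [polyDim_eq_finrank_vectorSpan, polyDim_eq_finrank_vectorSpan, ← f.map_vectorSpan]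
  exact Submodule.finrank_map_le _ _

theorem polyDim_image_of_leftInvOn {f : (Fin d → ℝ) →ᵃ[ℝ] (Fin e → ℝ)}
    {g : (Fin e → ℝ) →ᵃ[ℝ] (Fin d → ℝ)} (hgf : Set.LeftInvOn g f S) :
    polyDim (f '' S) = polyDim S :=
  (polyDim_image_le f S).antisymm <| by
    simpa only [hgf.image_image] using polyDim_image_le g (f '' S)

/-- The part of `P` on which the affine functional `φ` vanishes; a face of `P` whenever `φ` is
nonnegative on `P`. -/
def zeroFace (P : Set (Fin d → ℝ)) (φ : (Fin d → ℝ) →ᵃ[ℝ] ℝ) : Set (Fin d → ℝ) :=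
  {p ∈ P | φ p = 0}

theorem zeroFace_subset (P : Set (Fin d → ℝ)) (φ : (Fin d → ℝ) →ᵃ[ℝ] ℝ) : zeroFace P φ ⊆ P :=
  Set.sep_subset _ _

theorem zeroFace_convexHull (hφ : ∀ s ∈ S, 0 ≤ φ s) :
    zeroFace (convexHull ℝ S) φ = convexHull ℝ (zeroFace S φ) := by
  refine subset_antisymm (fun p hp => ?_) (convexHull_min
    (fun s hs => ⟨subset_convexHull ℝ S hs.1, hs.2⟩)
    ((convex_convexHull ℝ S).inter ((convex_singleton (0 : ℝ)).affine_preimage φ)))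
  have hconv : Convex ℝ {x | 0 ≤ φ x ∧ (φ x = 0 → x ∈ convexHull ℝ (zeroFace S φ))} := by
    rintro x ⟨hx, hx0⟩ y ⟨hy, hy0⟩ a b ha hb hab
    have hval : φ (a • x + b • y) = a * φ x + b * φ y := Convex.combo_affine_apply hab
    have hax := mul_nonneg ha hx
    have hby := mul_nonneg hb hy
    refine ⟨hval ▸ add_nonneg hax hby, fun h0 => ?_⟩
    rw [hval] at h0
    rcases ha.eq_or_lt with rfl | ha
    · obtain rfl : b = 1 := by linarith
      simpa using hy0 (by linarith)
    rcases hb.eq_or_lt with rfl | hb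
    · obtain rfl : a = 1 := by linarith
      simpa using hx0 (by linarith)
    exact convex_convexHull ℝ _ (hx0 (by nlinarith)) (hy0 (by nlinarith)) ha.le hb.le hab
  have hsub : S ⊆ {x | 0 ≤ φ x ∧ (φ x = 0 → x ∈ convexHull ℝ (zeroFace S φ))} := fun s hs =>
    ⟨hφ s hs, fun h0 => subset_convexHull ℝ _ ⟨hs, h0⟩⟩
  exact (convexHull_min hsub hconv hp.1).2 hp.2

theorem vectorSpan_zeroFace_le (P : Set (Fin d → ℝ)) (φ : (Fin d → ℝ) →ᵃ[ℝ] ℝ) :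
    vectorSpan ℝ (zeroFace P φ) ≤ vectorSpan ℝ P ⊓ LinearMap.ker φ.linear := by
  refine le_inf (vectorSpan_mono ℝ (zeroFace_subset P φ)) (Submodule.span_le.2 ?_)
  rintro _ ⟨p, hp, q, hq, rfl⟩
  simp only [vsub_eq_sub, SetLike.mem_coe]
  rw [LinearMap.mem_ker, affineMap_linear_sub, hp.2, hq.2, sub_zero]

/-- `φ` is a defining inequality `0 ≤ φ` of a facet of `P`. -/
structure IsFacetFunctional (P : Set (Fin d → ℝ)) (φ : (Fin d → ℝ) →ᵃ[ℝ] ℝ) : Prop where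
  nonneg : ∀ p ∈ P, 0 ≤ φ p
  nonempty : (zeroFace P φ).Nonempty
  polyDim_add_one : polyDim (zeroFace P φ) + 1 = polyDim P

namespace IsFacetFunctional

theorem isFacet (hφ : IsFacetFunctional P φ) : IsFacet P (zeroFace P φ) := by
  refine ⟨fun _ => ⟨-LinearMap.toContinuousLinearMap φ.linear, ?_⟩, hφ.nonempty,
    hφ.polyDim_add_one⟩
  obtain ⟨z, hz, hz0⟩ := hφ.nonempty
  ext p
  have hlin : ∀ q, (-LinearMap.toContinuousLinearMap φ.linear) q ≤
      (-LinearMap.toContinuousLinearMap φ.linear) p ↔ φ p ≤ φ q := fun q => by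
    have := affineMap_linear_sub φ q p
    rw [map_sub] at this
    simp only [neg_apply, LinearMap.coe_toContinuousLinearMap', neg_le_neg_iff]
    constructor <;> intro <;> linarith
  simp only [zeroFace, Set.mem_ofPred_eq, hlin]
  exact and_congr_right fun hp => ⟨fun hp0 q hq => hp0 ▸ hφ.nonneg q hq,
    fun h => (hz0 ▸ h z hz).antisymm (hφ.nonneg p hp)⟩

theorem of_vectorSpan_le_sup_span_singleton {w : Fin d → ℝ} (hnonneg : ∀ p ∈ P, 0 ≤ φ p)
    (hne : (zeroFace P φ).Nonempty) (hw : w ∈ vectorSpan ℝ P) (hφw : φ.linear w ≠ 0)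
    (hle : vectorSpan ℝ P ≤ vectorSpan ℝ (zeroFace P φ) ⊔ Submodule.span ℝ {w}) :
    IsFacetFunctional P φ where
  nonneg := hnonneg
  nonempty := hne
  polyDim_add_one := by
    rw [polyDim_eq_finrank_vectorSpan, polyDim_eq_finrank_vectorSpan]
    refine le_antisymm ?_ ?_
    · rw [← finrank_inf_ker_add_one hw hφw]
      exact Nat.succ_le_succ (Submodule.finrank_mono (vectorSpan_zeroFace_le P φ))
    · exact (Submodule.finrank_mono hle).trans <|
        (Submodule.finrank_add_le_finrank_add_finrank _ _).trans <|
          Nat.add_le_add_left (finrank_span_le_card ({w} : Set (Fin d → ℝ)) |>.trans (by simp)) _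

theorem exists_linear_ne_zero (hφ : IsFacetFunctional P φ) :
    ∃ w ∈ vectorSpan ℝ P, φ.linear w ≠ 0 := by
  by_contra! h
  obtain ⟨z, hz, hz0⟩ := hφ.nonempty
  have hzero : zeroFace P φ = P := Set.sep_eq_self_iff_mem_true.2 fun p hp => by
    have := h _ (vsub_mem_vectorSpan ℝ hp hz)
    rwa [vsub_eq_sub, affineMap_linear_sub, hz0, sub_zero] at this
  have := hφ.polyDim_add_one
  rw [hzero] at this
  omega

theorem vectorSpan_zeroFace (hφ : IsFacetFunctional P φ) :
    vectorSpan ℝ (zeroFace P φ) = vectorSpan ℝ P ⊓ LinearMap.ker φ.linear := by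
  obtain ⟨w, hw, hw0⟩ := hφ.exists_linear_ne_zero
  refine Submodule.eq_of_le_of_finrank_eq (vectorSpan_zeroFace_le P φ) ?_
  have hdim := hφ.polyDim_add_one
  rw [polyDim_eq_finrank_vectorSpan, polyDim_eq_finrank_vectorSpan,
    ← finrank_inf_ker_add_one hw hw0] at hdim
  omega

theorem vectorSpan_le_sup_span_singleton (hφ : IsFacetFunctional P φ) {w : Fin d → ℝ}
    (hw : w ∈ vectorSpan ℝ P) (hφw : φ.linear w ≠ 0) :
    vectorSpan ℝ P ≤ vectorSpan ℝ (zeroFace P φ) ⊔ Submodule.span ℝ {w} := by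
  intro v hv
  rw [hφ.vectorSpan_zeroFace]
  refine Submodule.mem_sup.2 ⟨v - (φ.linear v / φ.linear w) • w, ⟨?_, ?_⟩, _,
    Submodule.smul_mem _ _ (Submodule.mem_span_singleton_self w), sub_add_cancel _ _⟩
  · exact sub_mem hv (Submodule.smul_mem _ _ hw)
  · simp [hφw]

theorem pos_of_mem_intrinsicInterior (hφ : IsFacetFunctional P φ) {x : Fin d → ℝ}
    (hx : x ∈ intrinsicInterior ℝ P) : 0 < φ x := by
  refine (hφ.nonneg x (intrinsicInterior_subset hx)).lt_of_ne' fun hx0 => ?_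
  have hzero : zeroFace P φ = P := Set.sep_eq_self_iff_mem_true.2 fun p hp =>
    eq_zero_of_nonneg_of_mem_intrinsicInterior hφ.nonneg hx hx0 hp
  have := hφ.polyDim_add_one
  rw [hzero] at this
  omega

end IsFacetFunctional

theorem IsFacet.exists_functional (hF : IsFacet P F) :
    ∃ φ, IsFacetFunctional P φ ∧ F = zeroFace P φ := by
  obtain ⟨hexp, hne, hdim⟩ := hF
  obtain ⟨l, rfl⟩ := hexp hne
  obtain ⟨z, hz, hmax⟩ := hne
  have hface : {x ∈ P | ∀ y ∈ P, l y ≤ l x} = zeroFace P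
      (AffineMap.const ℝ _ (l z) - (l : (Fin d → ℝ) →ₗ[ℝ] ℝ).toAffineMap) := by
    ext p
    refine and_congr_right fun hp => ?_
    suffices (∀ y ∈ P, l y ≤ l p) ↔ l z = l p by simpa [sub_eq_zero] using this
    exact ⟨fun h => (h z hz).antisymm (hmax p hp), fun h y hy => h ▸ hmax y hy⟩
  refine ⟨_, ⟨fun p hp => ?_, ?_, ?_⟩, hface⟩
  · simpa using hmax p hp
  · exact ⟨z, hz, by simp⟩
  · rwa [← hface]

theorem zeroFace_image {f : (Fin d → ℝ) →ᵃ[ℝ] (Fin e → ℝ)} {g : (Fin e → ℝ) →ᵃ[ℝ] (Fin d → ℝ)}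
    (hgf : Set.LeftInvOn g f P) (φ : (Fin d → ℝ) →ᵃ[ℝ] ℝ) :
    zeroFace (f '' P) (φ.comp g) = f '' zeroFace P φ := by
  ext y
  constructor
  · rintro ⟨⟨p, hp, rfl⟩, h0⟩
    exact ⟨p, ⟨hp, by simpa [hgf hp] using h0⟩, rfl⟩
  · rintro ⟨p, ⟨hp, h0⟩, rfl⟩
    exact ⟨⟨p, hp, rfl⟩, by simpa [hgf hp] using h0⟩

theorem IsFacetFunctional.image {f : (Fin d → ℝ) →ᵃ[ℝ] (Fin e → ℝ)}
    {g : (Fin e → ℝ) →ᵃ[ℝ] (Fin d → ℝ)} (hgf : Set.LeftInvOn g f P)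
    (hφ : IsFacetFunctional P φ) : IsFacetFunctional (f '' P) (φ.comp g) where
  nonneg := by
    rintro _ ⟨p, hp, rfl⟩
    simpa [hgf hp] using hφ.nonneg p hp
  nonempty := zeroFace_image hgf φ ▸ hφ.nonempty.image f
  polyDim_add_one := by
    rw [zeroFace_image hgf, polyDim_image_of_leftInvOn (hgf.mono (zeroFace_subset P φ)),
      polyDim_image_of_leftInvOn hgf, hφ.polyDim_add_one]

theorem IsFacet.image {f : (Fin d → ℝ) →ᵃ[ℝ] (Fin e → ℝ)} {g : (Fin e → ℝ) →ᵃ[ℝ] (Fin d → ℝ)}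
    (hgf : Set.LeftInvOn g f P) (hF : IsFacet P F) : IsFacet (f '' P) (f '' F) := by
  obtain ⟨φ, hφ, rfl⟩ := hF.exists_functional
  exact zeroFace_image hgf φ ▸ (hφ.image hgf).isFacet

theorem polyDim_smul (P : Set (Fin d → ℝ)) {r : ℝ} (hr : r ≠ 0) : polyDim (r • P) = polyDim P := by
  simpa [Set.image_smul] using polyDim_image_of_leftInvOn (S := P)
    (f := (r • LinearMap.id (R := ℝ)).toAffineMap)
    (g := (r⁻¹ • LinearMap.id (R := ℝ)).toAffineMap) fun x _ => by simp [smul_smul, hr]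

theorem IsFacet.smul (hF : IsFacet P F) {r : ℝ} (hr : r ≠ 0) : IsFacet (r • P) (r • F) := by
  simpa [Set.image_smul] using hF.image (f := (r • LinearMap.id (R := ℝ)).toAffineMap)
    (g := (r⁻¹ • LinearMap.id (R := ℝ)).toAffineMap) fun x _ => by simp [smul_smul, hr]

end Faces

section FacetExistence

variable {d : ℕ} {V : Finset (Fin d → ℝ)} {φ : (Fin d → ℝ) →ᵃ[ℝ] ℝ} {e : Fin d → ℝ}

theorem exists_neg_of_notMem_vectorSpan_zeroFace {S : Set (Fin d → ℝ)} {w : Fin d → ℝ}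
    (hφe : φ.linear e ≠ 0) (hw : w ∈ vectorSpan ℝ S) (hφw : φ.linear w = 0)
    (hwZ : w ∉ vectorSpan ℝ (zeroFace S φ)) (hZ : (zeroFace S φ).Nonempty) :
    ∃ ψ : (Fin d → ℝ) →ᵃ[ℝ] ℝ, ψ.linear e = 0 ∧ (∀ z ∈ zeroFace S φ, ψ z = 0) ∧
      ∃ v ∈ S, ψ v < 0 := by
  have hwZe : w ∉ vectorSpan ℝ (zeroFace S φ) ⊔ Submodule.span ℝ {e} := by
    intro h
    obtain ⟨a, ha, _, hb, rfl⟩ := Submodule.mem_sup.1 h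
    obtain ⟨c, rfl⟩ := Submodule.mem_span_singleton.1 hb
    have ha0 : φ.linear a = 0 := (vectorSpan_zeroFace_le _ φ ha).2
    rw [map_add, ha0, map_smul, smul_eq_mul, zero_add] at hφw
    obtain rfl : c = 0 := (mul_eq_zero.1 hφw).resolve_right hφe
    exact hwZ (by simpa using ha)
  obtain ⟨z, hz⟩ := hZ
  obtain ⟨g, hgw, hg⟩ := Submodule.exists_le_ker_of_notMem hwZe
  have hge : g e = 0 := hg (Submodule.mem_sup_right (Submodule.mem_span_singleton_self e))
  have hgz : ∀ y ∈ zeroFace S φ, g y = g z := fun y hy => sub_eq_zero.1 <| by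
    rw [← map_sub]
    exact hg (Submodule.mem_sup_left (vsub_mem_vectorSpan ℝ hy hz))
  obtain ⟨v, hv, hgv⟩ : ∃ v ∈ S, g v ≠ g z := by
    by_contra! hconst
    refine hgw (Submodule.span_le (p := LinearMap.ker g).2 ?_ hw)
    rintro _ ⟨u, hu, v, hv, rfl⟩
    simp [hconst u hu, hconst v hv]
  refine ⟨(g z - g v) • (g.toAffineMap - AffineMap.const ℝ _ (g z)), by simp [hge],
    fun y hy => by simp [hgz y hy], v, hv, ?_⟩
  suffices (g z - g v) * (g v - g z) < 0 by simpa using this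
  nlinarith [sq_pos_of_ne_zero (sub_ne_zero.2 hgv)]

theorem exists_zeroFace_ssubset (hφ : ∀ v ∈ V, 0 ≤ φ v) (hZ : (zeroFace V φ).Nonempty)
    (hφe : φ.linear e < 0)
    (hne : vectorSpan ℝ (zeroFace V φ) ≠
      vectorSpan ℝ (V : Set (Fin d → ℝ)) ⊓ LinearMap.ker φ.linear) :
    ∃ φ' : (Fin d → ℝ) →ᵃ[ℝ] ℝ, (∀ v ∈ V, 0 ≤ φ' v) ∧ φ'.linear e < 0 ∧
      zeroFace V φ ⊂ zeroFace V φ' := by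
  obtain ⟨w, ⟨hw, hφw⟩, hwZ⟩ := SetLike.exists_of_lt ((vectorSpan_zeroFace_le _ φ).lt_of_ne hne)
  obtain ⟨ψ, hψe, hψZ, hψV⟩ := exists_neg_of_notMem_vectorSpan_zeroFace hφe.ne hw hφw hwZ hZ
  obtain ⟨t, hnonneg, v, hv, hψv, hv0⟩ := exists_add_mul_nonneg_and_eq_zero hφ hψV
  refine ⟨φ + t • ψ, hnonneg, by simpa [hψe] using hφe,
    Set.ssubset_iff_exists.2 ⟨fun z hz => ⟨hz.1, ?_⟩, v, ⟨hv, hv0⟩, fun hvZ => hψv.ne (hψZ v hvZ)⟩⟩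
  simp [hz.2, hψZ z hz]

theorem exists_nonneg_linear_neg (hV : V.Nonempty) (he : e ≠ 0) :
    ∃ φ : (Fin d → ℝ) →ᵃ[ℝ] ℝ, (∀ v ∈ V, 0 ≤ φ v) ∧ φ.linear e < 0 ∧ (zeroFace V φ).Nonempty := by
  obtain ⟨l, hle, -⟩ := Submodule.exists_le_ker_of_notMem (K := ℝ) (mt (Submodule.mem_bot ℝ).1 he)
  obtain ⟨z, hz, hmin⟩ := V.exists_min_image (-l e • l) hV
  refine ⟨(-l e • l).toAffineMap - AffineMap.const ℝ _ ((-l e • l) z),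
    fun v hv => ?_, ?_, z, hz, ?_⟩
  · exact sub_nonneg.2 (hmin v hv)
  · simpa using mul_self_pos.2 hle
  · exact sub_self _

/- Among the inequalities valid on `V` that are tight somewhere and decrease in the direction `e`,
one that is tight at a maximal set of points of `V` defines a facet. -/
theorem exists_isFacetFunctional_linear_neg
    (he : e ∈ vectorSpan ℝ (V : Set (Fin d → ℝ))) (he0 : e ≠ 0) :
    ∃ φ, IsFacetFunctional (convexHull ℝ (V : Set (Fin d → ℝ))) φ ∧ φ.linear e < 0 := by
  classical
  have hV : V.Nonempty := by
    by_contra hV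
    simp [Finset.not_nonempty_iff_eq_empty.1 hV, he0] at he
  obtain ⟨φ, ⟨hφ, hφe, hZ⟩, hmin⟩ := exists_minimalFor_of_wellFoundedLT
    (fun φ : (Fin d → ℝ) →ᵃ[ℝ] ℝ => (∀ v ∈ V, 0 ≤ φ v) ∧ φ.linear e < 0 ∧ (zeroFace V φ).Nonempty)
    (fun φ => V.filter (φ · ≠ 0)) (exists_nonneg_linear_neg hV he0)
  have hspan : vectorSpan ℝ (zeroFace V φ) =
      vectorSpan ℝ (V : Set (Fin d → ℝ)) ⊓ LinearMap.ker φ.linear := by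
    by_contra hne
    obtain ⟨φ', hφ', hφe', hsub, hnsub⟩ := exists_zeroFace_ssubset hφ hZ hφe hne
    refine hnsub fun v hv => ⟨hv.1, ?_⟩
    by_contra hv0
    have hle : V.filter (φ' · ≠ 0) ≤ V.filter (φ · ≠ 0) :=
      Finset.monotone_filter_right V fun u hu hu0 h0 => hu0 (hsub ⟨hu, h0⟩).2
    exact (Finset.mem_filter.1 (hmin ⟨hφ', hφe', hZ.mono hsub⟩ hle
      (Finset.mem_filter.2 ⟨hv.1, hv0⟩))).2 hv.2
  refine ⟨φ, ⟨nonneg_of_mem_convexHull hφ, ?_, ?_⟩, hφe⟩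
  · rw [zeroFace_convexHull hφ]
    exact hZ.convexHull
  · rw [zeroFace_convexHull hφ, polyDim_convexHull, polyDim_convexHull,
      polyDim_eq_finrank_vectorSpan, polyDim_eq_finrank_vectorSpan, hspan,
      finrank_inf_ker_add_one he hφe.ne]

theorem IsLatticePolytope.exists_isFacetFunctional_linear_neg {P : Set (Fin d → ℝ)}
    (hP : IsLatticePolytope P) (he : e ∈ vectorSpan ℝ P) (he0 : e ≠ 0) :
    ∃ φ, IsFacetFunctional P φ ∧ φ.linear e < 0 := by
  obtain ⟨V, -, -, rfl⟩ := hP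
  rw [vectorSpan_convexHull] at he
  exact _root_.exists_isFacetFunctional_linear_neg he he0

theorem IsLatticePolytope.exists_isFacetFunctional {P : Set (Fin d → ℝ)}
    (hP : IsLatticePolytope P) (hdim : 0 < polyDim P) : ∃ φ, IsFacetFunctional P φ := by
  have hbot : vectorSpan ℝ P ≠ ⊥ := fun hbot => by
    rw [polyDim_eq_finrank_vectorSpan, hbot, finrank_bot] at hdim
    exact hdim.false
  obtain ⟨e, he, he0⟩ := Submodule.exists_mem_ne_zero_of_ne_bot hbot
  obtain ⟨φ, hφ, -⟩ := hP.exists_isFacetFunctional_linear_neg he he0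
  exact ⟨φ, hφ⟩

end FacetExistence

section Reflexive

variable {d : ℕ} {P Q : Set (Fin d → ℝ)} {φ : (Fin d → ℝ) →ᵃ[ℝ] ℝ} {x y : Fin d → ℝ}

/-- `Q` is reflexive with distinguished interior lattice point `x`, i.e. every facet of `Q` has
lattice distance one from `x`. -/
structure IsReflexiveAt (Q : Set (Fin d → ℝ)) (x : Fin d → ℝ) : Prop where
  mem_intrinsicInterior : x ∈ intrinsicInterior ℝ Q
  isLatticePt : IsLatticePt x
  exists_isIntegralOn : ∀ F, IsFacet Q F →
    ∃ u : (Fin d → ℝ) →ᵃ[ℝ] ℝ, IsIntegralOn Q u ∧ ∀ f ∈ F, u f = u x + 1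

theorem isReflexivePolytope_iff : IsReflexivePolytope Q ↔ ∃ x, IsReflexiveAt Q x :=
  ⟨fun ⟨x, hx, hlat, hF⟩ => ⟨x, hx, hlat, hF⟩, fun ⟨x, hx, hlat, hF⟩ => ⟨x, hx, hlat, hF⟩⟩

/- Both sides are affine in `y`, vanish on the facet and agree at `x`. -/
theorem IsFacetFunctional.apply_eq_mul {u : (Fin d → ℝ) →ᵃ[ℝ] ℝ} (hφ : IsFacetFunctional Q φ)
    (hx : x ∈ affineSpan ℝ Q) (hu : ∀ f ∈ zeroFace Q φ, u f = u x + 1) (hy : y ∈ affineSpan ℝ Q) :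
    φ y = (u x + 1 - u y) * φ x := by
  obtain ⟨z, hz⟩ := hφ.nonempty
  have hzaff := subset_affineSpan ℝ Q (zeroFace_subset Q φ hz)
  have hlin (ψ : (Fin d → ℝ) →ᵃ[ℝ] ℝ) : ψ.linear (φ x • (y - z) - φ y • (x - z)) =
      φ x * (ψ y - ψ z) - φ y * (ψ x - ψ z) := by
    rw [map_sub, map_smul, map_smul, affineMap_linear_sub, affineMap_linear_sub, smul_eq_mul,
      smul_eq_mul]
  have hmem : φ x • (y - z) - φ y • (x - z) ∈ vectorSpan ℝ (zeroFace Q φ) := by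
    rw [hφ.vectorSpan_zeroFace, ← direction_affineSpan]
    refine ⟨sub_mem (Submodule.smul_mem _ _ (AffineSubspace.vsub_mem_direction hy hzaff))
      (Submodule.smul_mem _ _ (AffineSubspace.vsub_mem_direction hx hzaff)), ?_⟩
    rw [SetLike.mem_coe, LinearMap.mem_ker, hlin, hz.2]
    ring
  have hle : vectorSpan ℝ (zeroFace Q φ) ≤ LinearMap.ker u.linear := by
    refine Submodule.span_le.2 ?_
    rintro _ ⟨p, hp, q, hq, rfl⟩
    simp only [vsub_eq_sub, SetLike.mem_coe, LinearMap.mem_ker, affineMap_linear_sub, hu p hp,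
      hu q hq, sub_self]
  have h0 := (hlin u).symm.trans (hle hmem)
  rw [hu z hz] at h0
  linarith

theorem IsReflexiveAt.apply_le (hQ : IsReflexiveAt Q x) (hφ : IsFacetFunctional Q φ)
    (hy : y ∈ affineSpan ℝ Q) (hylat : IsLatticePt y) (hpos : 0 < φ y) : φ x ≤ φ y := by
  obtain ⟨u, hint, hu⟩ := hQ.exists_isIntegralOn _ hφ.isFacet
  have hxaff := intrinsicInterior_subset.trans (subset_affineSpan ℝ Q) hQ.mem_intrinsicInterior
  have hx := hφ.pos_of_mem_intrinsicInterior hQ.mem_intrinsicInterior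
  have heq := hφ.apply_eq_mul hxaff hu hy
  obtain ⟨m, hm⟩ := hint x hxaff hQ.isLatticePt
  obtain ⟨n, hn⟩ := hint y hy hylat
  have hmn : 0 < m + 1 - n := by
    have : 0 < u x + 1 - u y := pos_of_mul_pos_left (heq ▸ hpos) hx.le
    rw [hm, hn] at this
    exact_mod_cast this
  have hone : 1 ≤ u x + 1 - u y := by
    rw [hm, hn]
    exact_mod_cast hmn
  nlinarith

/- Adding `r - c` copies of a vertex `v` on the facet to `x₁` gives a lattice point of `r • P`. -/
theorem IsReflexiveAt.apply_le_div_mul {r c : ℕ} (hP : IsLatticePolytope P)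
    (hQ : IsReflexiveAt ((r : ℝ) • P) x) (hc : 0 < c) (hcr : c ≤ r)
    (hylat : IsLatticePt ((c : ℝ) • y)) (hy : y ∈ intrinsicInterior ℝ P)
    (hφ : IsFacetFunctional ((r : ℝ) • P) φ) : φ x ≤ c / r * φ ((r : ℝ) • y) := by
  obtain ⟨V, -, hV, rfl⟩ := hP
  have hr : (0 : ℝ) < r := by exact_mod_cast hc.trans_le hcr
  obtain ⟨v, hv, hv0⟩ : ∃ v ∈ V, φ ((r : ℝ) • v) = 0 := by
    have hne := hφ.nonempty
    have hnn := hφ.nonneg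
    rw [← convexHull_smul] at hne hnn
    rw [zeroFace_convexHull fun s hs => hnn s (subset_convexHull ℝ _ hs),
      convexHull_nonempty_iff] at hne
    obtain ⟨_, ⟨v, hv, rfl⟩, hv0⟩ := hne
    exact ⟨v, hv, hv0⟩
  have hryrel := smul_mem_intrinsicInterior_smul (convex_convexHull ℝ _) (r : ℝ) hy
  have hval : φ ((c : ℝ) • y + ((r - c : ℕ) : ℝ) • v) = c / r * φ ((r : ℝ) • y) := by
    have : (c : ℝ) • y + ((r - c : ℕ) : ℝ) • v =
      (c / r : ℝ) • ((r : ℝ) • y) + (1 - c / r : ℝ) • ((r : ℝ) • v) := by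
      rw [Nat.cast_sub hcr]
      match_scalars <;> field_simp
    rw [this, Convex.combo_affine_apply (by ring), hv0, smul_zero, add_zero, smul_eq_mul]
  rw [← hval]
  refine hQ.apply_le hφ (subset_affineSpan ℝ _ ?_) (hylat.add ((hV v hv).natCast_smul _)) ?_
  · have hmem := Set.add_mem_add
      (Set.smul_mem_smul_set (a := (c : ℝ)) (intrinsicInterior_subset hy))
      (Set.smul_mem_smul_set (a := ((r - c : ℕ) : ℝ)) (subset_convexHull ℝ _ hv))
    rwa [← (convex_convexHull ℝ _).add_smul (by positivity) (by positivity), ← Nat.cast_add,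
      Nat.add_sub_cancel' hcr] at hmem
  · rw [hval]
    have := hφ.pos_of_mem_intrinsicInterior hryrel
    positivity

theorem IsReflexiveAt.eq_of_le {r c : ℕ} (hP : IsLatticePolytope P) (hdim : 0 < polyDim P)
    (hQ : IsReflexiveAt ((r : ℝ) • P) x) (hc : 0 < c) (hcr : c ≤ r)
    (hy : y ∈ intrinsicInterior ℝ ((c : ℝ) • P)) (hylat : IsLatticePt y) : c = r ∧ x = y := by
  have hr : (0 : ℝ) < r := by exact_mod_cast hc.trans_le hcr
  obtain ⟨w, hw, rfl⟩ : ∃ w ∈ intrinsicInterior ℝ P, y = (c : ℝ) • w := by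
    have hc0 : (c : ℝ) ≠ 0 := by exact_mod_cast hc.ne'
    refine ⟨(c : ℝ)⁻¹ • y, ?_, (smul_inv_smul₀ hc0 y).symm⟩
    simpa only [inv_smul_smul₀ hc0] using
      smul_mem_intrinsicInterior_smul (hP.convex.smul _) (c : ℝ)⁻¹ hy
  have hrw := smul_mem_intrinsicInterior_smul hP.convex (r : ℝ) hw
  have hle {φ : (Fin d → ℝ) →ᵃ[ℝ] ℝ} (hφ : IsFacetFunctional ((r : ℝ) • P) φ) :
      φ x ≤ c / r * φ ((r : ℝ) • w) := hQ.apply_le_div_mul hP hc hcr hylat hw hφ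
  have hxw : x = (r : ℝ) • w := by
    by_contra hne
    obtain ⟨φ, hφ, hlt⟩ := (hP.natCast_smul r).exists_isFacetFunctional_linear_neg
      (vsub_mem_vectorSpan ℝ (intrinsicInterior_subset hrw)
        (intrinsicInterior_subset hQ.mem_intrinsicInterior)) (sub_ne_zero.2 (Ne.symm hne))
    have hcr1 : (c / r : ℝ) ≤ 1 := (div_le_one hr).2 (by exact_mod_cast hcr)
    have := hφ.pos_of_mem_intrinsicInterior hrw
    rw [vsub_eq_sub, affineMap_linear_sub] at hlt
    nlinarith [hle hφ]
  obtain ⟨φ, hφ⟩ := (hP.natCast_smul r).exists_isFacetFunctional (polyDim_smul P hr.ne' ▸ hdim)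
  have hone : (1 : ℝ) ≤ c / r := le_of_mul_le_mul_right
    (by simpa only [one_mul, ← hxw] using hle hφ)
    (hφ.pos_of_mem_intrinsicInterior hQ.mem_intrinsicInterior)
  obtain rfl : c = r := hcr.antisymm (by exact_mod_cast (one_le_div hr).1 hone)
  exact ⟨rfl, hxw⟩

theorem IsGorenstein.isReflexiveAt_polyCodeg (hP : IsLatticePolytope P) (hdim : 0 < polyDim P)
    (hG : IsGorenstein P) (hx : x ∈ intrinsicInterior ℝ ((polyCodeg P : ℝ) • P))
    (hlat : IsLatticePt x) : IsReflexiveAt ((polyCodeg P : ℝ) • P) x := by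
  obtain ⟨r, hr, hreflexive⟩ := hG
  obtain ⟨x', hx'⟩ := isReflexivePolytope_iff.1 hreflexive
  have hle : polyCodeg P ≤ r :=
    Nat.sInf_le ⟨hr, fun h => h x' hx'.mem_intrinsicInterior hx'.isLatticePt⟩
  obtain ⟨hcr, rfl⟩ := hx'.eq_of_le hP hdim hP.polyCodeg_spec.1 hle hx hlat
  rwa [hcr]

end Reflexive

section Join

variable {d : ℕ} {A B F : Set (Fin d → ℝ)}

/- In a join the directions of `A` and `B` and a vector from `A` to `B` are independent. -/
theorem exists_linearMap_eq_of_polyDim_add (hdim : polyDim A + polyDim B + 1 =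
    polyDim (convexHull ℝ (A ∪ B))) {a₀ b₀ : Fin d → ℝ} (ha₀ : a₀ ∈ A) (hb₀ : b₀ ∈ B)
    (m : (Fin d → ℝ) →ₗ[ℝ] ℝ) (c : ℝ) :
    ∃ l : (Fin d → ℝ) →ₗ[ℝ] ℝ, (∀ u ∈ vectorSpan ℝ A, l u = m u) ∧
      (∀ v ∈ vectorSpan ℝ B, l v = 0) ∧ l (b₀ - a₀) = c := by
  let T : vectorSpan ℝ A × vectorSpan ℝ B × ℝ →ₗ[ℝ] (Fin d → ℝ) :=
    (vectorSpan ℝ A).subtype.coprod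
      ((vectorSpan ℝ B).subtype.coprod (LinearMap.toSpanSingleton ℝ _ (b₀ - a₀)))
  have hrange : LinearMap.range T = (affineSpan ℝ (A ∪ B)).direction := by
    rw [AffineSubspace.span_union, AffineSubspace.direction_sup (subset_affineSpan ℝ A ha₀)
      (subset_affineSpan ℝ B hb₀), direction_affineSpan, direction_affineSpan, sup_assoc,
      LinearMap.range_coprod, LinearMap.range_coprod, Submodule.range_subtype,
      Submodule.range_subtype, LinearMap.range_toSpanSingleton, vsub_eq_sub]
  have hker : LinearMap.ker T = ⊥ := by
    have hsum := T.finrank_range_add_finrank_ker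
    rw [hrange, Module.finrank_prod, Module.finrank_prod, Module.finrank_self] at hsum
    rw [polyDim_convexHull, polyDim_eq_finrank_vectorSpan, polyDim_eq_finrank_vectorSpan,
      polyDim] at hdim
    exact Submodule.finrank_eq_zero.1 (by omega)
  obtain ⟨ρ, hρ⟩ := T.exists_leftInverse_of_injective hker
  have hρT (u : vectorSpan ℝ A) (v : vectorSpan ℝ B) (t : ℝ) :
      ρ (u + (v + t • (b₀ - a₀))) = (u, v, t) := LinearMap.congr_fun hρ (u, v, t)
  let k : vectorSpan ℝ A × vectorSpan ℝ B × ℝ →ₗ[ℝ] ℝ :=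
    (m ∘ₗ (vectorSpan ℝ A).subtype).coprod
      (LinearMap.coprod 0 (LinearMap.toSpanSingleton ℝ ℝ c))
  refine ⟨k ∘ₗ ρ, fun u hu => ?_, fun v hv => ?_, ?_⟩
  · simpa [k] using congrArg k (hρT ⟨u, hu⟩ 0 0)
  · simpa [k] using congrArg k (hρT 0 ⟨v, hv⟩ 0)
  · simpa [k] using congrArg k (hρT 0 0 1)

theorem exists_affineMap_eqOn_and_eq_zero (hA : A.Nonempty) (hB : B.Nonempty)
    (hdim : polyDim A + polyDim B + 1 = polyDim (convexHull ℝ (A ∪ B)))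
    (α : (Fin d → ℝ) →ᵃ[ℝ] ℝ) :
    ∃ φ : (Fin d → ℝ) →ᵃ[ℝ] ℝ, Set.EqOn φ α A ∧ ∀ b ∈ B, φ b = 0 := by
  obtain ⟨a₀, ha₀⟩ := hA
  obtain ⟨b₀, hb₀⟩ := hB
  obtain ⟨l, hlA, hlB, hl⟩ := exists_linearMap_eq_of_polyDim_add hdim ha₀ hb₀ α.linear (-α a₀)
  refine ⟨l.toAffineMap + AffineMap.const ℝ _ (α a₀ - l a₀), fun a ha => ?_, fun b hb => ?_⟩
  · have := hlA _ (vsub_mem_vectorSpan ℝ ha ha₀)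
    rw [vsub_eq_sub, map_sub, affineMap_linear_sub] at this
    change l a + (α a₀ - l a₀) = α a
    linarith
  · have := hlB _ (vsub_mem_vectorSpan ℝ hb hb₀)
    rw [vsub_eq_sub, map_sub] at this
    rw [map_sub] at hl
    change l b + (α a₀ - l a₀) = 0
    linarith

theorem nonneg_of_eqOn_of_eq_zero {α φ : (Fin d → ℝ) →ᵃ[ℝ] ℝ} (hα : ∀ a ∈ A, 0 ≤ α a)
    (hφA : Set.EqOn φ α A) (hφB : ∀ b ∈ B, φ b = 0) : ∀ s ∈ A ∪ B, 0 ≤ φ s := by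
  rintro s (hs | hs)
  · exact hφA hs ▸ hα s hs
  · exact (hφB s hs).ge

theorem zeroFace_convexHull_union {α φ : (Fin d → ℝ) →ᵃ[ℝ] ℝ} (hα : ∀ a ∈ A, 0 ≤ α a)
    (hφA : Set.EqOn φ α A) (hφB : ∀ b ∈ B, φ b = 0) :
    zeroFace (convexHull ℝ (A ∪ B)) φ = convexHull ℝ (zeroFace A α ∪ B) := by
  rw [zeroFace_convexHull (nonneg_of_eqOn_of_eq_zero hα hφA hφB)]
  congr 1
  ext s
  constructor
  · rintro ⟨hs | hs, h0⟩
    · exact .inl ⟨hs, hφA hs ▸ h0⟩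
    · exact .inr hs
  · rintro (⟨hs, h0⟩ | hs)
    · exact ⟨.inl hs, (hφA hs).trans h0⟩
    · exact ⟨.inr hs, hφB s hs⟩

theorem IsFacetFunctional.convexHull_union_left {α φ : (Fin d → ℝ) →ᵃ[ℝ] ℝ}
    (hα : IsFacetFunctional A α) (hφA : Set.EqOn φ α A) (hφB : ∀ b ∈ B, φ b = 0) :
    IsFacetFunctional (convexHull ℝ (A ∪ B)) φ := by
  have hface := zeroFace_convexHull_union hα.nonneg hφA hφB
  obtain ⟨z, hz⟩ := hα.nonempty
  have hzA : z ∈ A := zeroFace_subset A α hz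
  have hzAB : z ∈ A ∪ B := .inl hzA
  obtain ⟨w, hw, hαw⟩ := hα.exists_linear_ne_zero
  have hφw : φ.linear w = α.linear w := LinearMap.eqOn_span (s := A -ᵥ A) (by
    rintro _ ⟨p, hp, q, hq, rfl⟩
    simp only [vsub_eq_sub, affineMap_linear_sub, hφA hp, hφA hq]) hw
  refine .of_vectorSpan_le_sup_span_singleton (w := w)
    (nonneg_of_mem_convexHull (nonneg_of_eqOn_of_eq_zero hα.nonneg hφA hφB))
    ⟨z, hface ▸ subset_convexHull ℝ _ (.inl hz)⟩ ?_ (hφw ▸ hαw) ?_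
  · rw [vectorSpan_convexHull]
    exact vectorSpan_mono ℝ Set.subset_union_left hw
  rw [hface, vectorSpan_convexHull, vectorSpan_convexHull,
    vectorSpan_eq_span_vsub_set_right ℝ hzAB]
  have hmono : vectorSpan ℝ (zeroFace A α) ≤ vectorSpan ℝ (zeroFace A α ∪ B) :=
    vectorSpan_mono ℝ Set.subset_union_left
  refine Submodule.span_le.2 ?_
  rintro _ ⟨s, hs | hs, rfl⟩
  · exact SetLike.le_def.1 (sup_le_sup_right hmono _)
      (hα.vectorSpan_le_sup_span_singleton hw hαw (vsub_mem_vectorSpan ℝ hs hzA))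
  · exact Submodule.mem_sup_left (vsub_mem_vectorSpan ℝ (.inr hs) (.inl hz))

theorem IsFacet.convexHull_union_left (hA : A.Nonempty) (hB : B.Nonempty)
    (hdim : polyDim A + polyDim B + 1 = polyDim (convexHull ℝ (A ∪ B))) (hF : IsFacet A F) :
    IsFacet (convexHull ℝ (A ∪ B)) (convexHull ℝ (F ∪ B)) := by
  obtain ⟨α, hα, rfl⟩ := hF.exists_functional
  obtain ⟨φ, hφA, hφB⟩ := exists_affineMap_eqOn_and_eq_zero hA hB hdim α
  rw [← zeroFace_convexHull_union hα.nonneg hφA hφB]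
  exact (hα.convexHull_union_left hφA hφB).isFacet

theorem add_mem_smul_convexHull_union {a b : ℝ} (ha : 0 ≤ a) (hb : 0 ≤ b) {y z : Fin d → ℝ}
    (hy : y ∈ a • A) (hz : z ∈ b • B) : y + z ∈ (a + b) • convexHull ℝ (A ∪ B) := by
  rw [(convex_convexHull ℝ _).add_smul ha hb]
  exact Set.add_mem_add
    (Set.smul_set_mono (Set.subset_union_left.trans (subset_convexHull ℝ _)) hy)
    (Set.smul_set_mono (Set.subset_union_right.trans (subset_convexHull ℝ _)) hz)

theorem IsReflexiveAt.of_convexHull_union_left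
    (hdim : polyDim A + polyDim B + 1 = polyDim (convexHull ℝ (A ∪ B))) {a b : ℝ} (ha : 0 < a)
    (hb : 0 < b) {y z : Fin d → ℝ} (hy : y ∈ intrinsicInterior ℝ (a • A)) (hylat : IsLatticePt y)
    (hz : z ∈ b • B) (hzlat : IsLatticePt z)
    (h : IsReflexiveAt ((a + b) • convexHull ℝ (A ∪ B)) (y + z)) : IsReflexiveAt (a • A) y := by
  have hA : A.Nonempty := Set.smul_set_nonempty.1 ⟨y, intrinsicInterior_subset hy⟩
  have hB : B.Nonempty := Set.smul_set_nonempty.1 ⟨z, hz⟩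
  have hab := add_pos ha hb
  refine ⟨hy, hylat, fun F hF => ?_⟩
  have hF' : IsFacet A (a⁻¹ • F) := by
    simpa only [inv_smul_smul₀ ha.ne'] using hF.smul (inv_ne_zero ha.ne')
  obtain ⟨u, hint, hu⟩ := h.exists_isIntegralOn _
    ((hF'.convexHull_union_left hA hB hdim).smul hab.ne')
  let shift : (Fin d → ℝ) →ᵃ[ℝ] (Fin d → ℝ) := AffineMap.id ℝ _ + AffineMap.const ℝ _ z
  have hshift : affineSpan ℝ (a • A) ≤
      (affineSpan ℝ ((a + b) • convexHull ℝ (A ∪ B))).comap shift :=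
    affineSpan_le.2 fun p hp =>
      subset_affineSpan ℝ _ (add_mem_smul_convexHull_union ha.le hb.le hp hz)
  refine ⟨u.comp shift, fun q hq hqlat => hint (q + z) (hshift hq) (hqlat.add hzlat),
    fun f hf => hu (f + z) (add_mem_smul_convexHull_union ha.le hb.le ?_ hz)⟩
  rwa [smul_inv_smul₀ ha.ne']

theorem IsGorenstein.of_convexHull_union_left (hA : IsLatticePolytope A) (hB : IsLatticePolytope B)
    (hdim : polyDim A + polyDim B + 1 = polyDim (convexHull ℝ (A ∪ B)))
    (hcodeg : polyCodeg A + polyCodeg B = polyCodeg (convexHull ℝ (A ∪ B)))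
    (hG : IsGorenstein (convexHull ℝ (A ∪ B))) : IsGorenstein A := by
  obtain ⟨ha, y, hy, hylat⟩ := hA.polyCodeg_spec
  obtain ⟨hb, z, hz, hzlat⟩ := hB.polyCodeg_spec
  have ha' : (0 : ℝ) < polyCodeg A := Nat.cast_pos.2 ha
  have hb' : (0 : ℝ) < polyCodeg B := Nat.cast_pos.2 hb
  have hyz := add_mem_intrinsicInterior_smul_convexHull_union hA.convex hB.convex ha' hb' hy hz
  have hsum : (polyCodeg A + polyCodeg B : ℝ) = polyCodeg (convexHull ℝ (A ∪ B)) := by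
    rw [← hcodeg, Nat.cast_add]
  have hrefl := hG.isReflexiveAt_polyCodeg (hA.convexHull_union hB) (by omega) (hsum ▸ hyz)
    (hylat.add hzlat)
  exact ⟨polyCodeg A, ha, isReflexivePolytope_iff.2 ⟨y, .of_convexHull_union_left hdim ha' hb' hy
    hylat (intrinsicInterior_subset hz) hzlat (hsum ▸ hrefl)⟩⟩

end Join

section LatticeIso

variable {d e m : ℕ} {P : Set (Fin d → ℝ)} {Q : Set (Fin e → ℝ)} {R : Set (Fin m → ℝ)}

theorem LatticeIso.symm (h : LatticeIso P Q) : LatticeIso Q P := by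
  obtain ⟨f, g, hfP, hgQ, hgf, hfg, hf, hg⟩ := h
  exact ⟨g, f, hgQ, hfP, hfg, hgf, hg, hf⟩

theorem LatticeIso.trans (h : LatticeIso P Q) (h' : LatticeIso Q R) : LatticeIso P R := by
  obtain ⟨f, g, rfl, hgQ, hgf, hfg, hf, hg⟩ := h
  obtain ⟨f', g', rfl, hgR, hgf', hfg', hf', hg'⟩ := h'
  have hmaps {x} (hx : x ∈ affineSpan ℝ P) := map_mem_affineSpan_image f hx
  have hmaps' {y} (hy : y ∈ affineSpan ℝ (f' '' (f '' P))) := map_mem_affineSpan_image g' hy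
  rw [hgR] at hmaps'
  refine ⟨f'.comp f, g.comp g', ?_, ?_, fun x hx => ?_, fun y hy => ?_,
    fun x hx hlat => hf' _ (hmaps hx) (hf x hx hlat),
    fun y hy hlat => hg _ (hmaps' hy) (hg' y hy hlat)⟩
  · rw [AffineMap.coe_comp, Set.image_comp]
  · rw [AffineMap.coe_comp, Set.image_comp, hgR, hgQ]
  · rw [AffineMap.comp_apply, AffineMap.comp_apply, hgf' _ (hmaps hx), hgf x hx]
  · rw [AffineMap.comp_apply, AffineMap.comp_apply, hfg _ (hmaps' hy), hfg' y hy]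

theorem LatticeIso.exists_image_eq_and_forall_subset (h : LatticeIso P Q) :
    ∃ f : (Fin d → ℝ) →ᵃ[ℝ] (Fin e → ℝ), f '' P = Q ∧ ∀ S ⊆ P, LatticeIso S (f '' S) := by
  obtain ⟨f, g, rfl, -, hgf, hfg, hf, hg⟩ := h
  refine ⟨f, rfl, fun S hS => ?_⟩
  have hSP := affineSpan_mono ℝ hS
  have hfSP := affineSpan_mono ℝ (Set.image_mono (f := f) hS)
  have hinv : Set.LeftInvOn g f S := fun x hx => hgf x (hSP (subset_affineSpan ℝ S hx))
  exact ⟨f, g, rfl, hinv.image_image, fun x hx => hgf x (hSP hx), fun y hy => hfg y (hfSP hy),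
    fun x hx => hf x (hSP hx), fun y hy => hg y (hfSP hy)⟩

theorem LatticeIso.isLatticePolytope (h : LatticeIso P Q) (hP : IsLatticePolytope P) :
    IsLatticePolytope Q := by
  classical
  obtain ⟨f, -, rfl, -, -, -, hf, -⟩ := h
  obtain ⟨V, hV, hlat, rfl⟩ := hP
  refine ⟨V.image f, hV.image f, fun w hw => ?_, ?_⟩
  · obtain ⟨v, hv, rfl⟩ := Finset.mem_image.1 hw
    exact hf v (subset_affineSpan ℝ _ (subset_convexHull ℝ _ hv)) (hlat v hv)
  · rw [f.image_convexHull, Finset.coe_image]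

theorem LatticeIso.polyDim_eq (h : LatticeIso P Q) : polyDim Q = polyDim P := by
  obtain ⟨f, g, rfl, -, hgf, -⟩ := h
  exact polyDim_image_of_leftInvOn fun x hx => hgf x (subset_affineSpan ℝ P hx)

theorem LatticeIso.isHollow (h : LatticeIso P Q) (hQ : Convex ℝ Q) (hP : IsHollow P) :
    IsHollow Q := by
  obtain ⟨-, g, -, rfl, -, -, -, hg⟩ := h
  exact fun y hy hlat => hP (g y) (affineMap_image_mem_intrinsicInterior hQ g hy)
    (hg y (subset_affineSpan ℝ Q (intrinsicInterior_subset hy)) hlat)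

theorem LatticeIso.isReflexivePolytope (h : LatticeIso P Q) (hP : Convex ℝ P)
    (hrefl : IsReflexivePolytope P) : IsReflexivePolytope Q := by
  obtain ⟨f, g, rfl, hg, hgf, hfg, hflat, hglat⟩ := h
  obtain ⟨x, hx, hxlat, hfacet⟩ := hrefl
  have hxaff := subset_affineSpan ℝ P (intrinsicInterior_subset hx)
  refine ⟨f x, affineMap_image_mem_intrinsicInterior hP f hx, hflat x hxaff hxlat, fun F hF => ?_⟩
  have hgF : IsFacet P (g '' F) :=
    hg ▸ hF.image (g := f) fun y hy => hfg y (subset_affineSpan ℝ _ hy)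
  obtain ⟨u, hint, hu⟩ := hfacet _ hgF
  refine ⟨u.comp g, fun y hy hylat => hint (g y) ?_ (hglat y hy hylat), fun y hy => ?_⟩
  · simpa only [hg] using map_mem_affineSpan_image g hy
  · rw [AffineMap.comp_apply, AffineMap.comp_apply, hgf x hxaff]
    exact hu _ (Set.mem_image_of_mem g hy)

/-- The affine map `y ↦ f (y - k • v) + k • f v`. It is the conjugate of `f` by the dilation by
`k + 1`, whatever the point `v`; written in this way, it visibly preserves lattice points if `f`
does and `v` is a lattice point. -/
noncomputable def dilate (f : (Fin d → ℝ) →ᵃ[ℝ] (Fin e → ℝ)) (v : Fin d → ℝ) (k : ℕ) :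
    (Fin d → ℝ) →ᵃ[ℝ] (Fin e → ℝ) :=
  f.comp (AffineMap.id ℝ _ - AffineMap.const ℝ _ ((k : ℝ) • v)) +
    AffineMap.const ℝ _ ((k : ℝ) • f v)

theorem dilate_apply (f : (Fin d → ℝ) →ᵃ[ℝ] (Fin e → ℝ)) (v : Fin d → ℝ) (k : ℕ)
    (y : Fin d → ℝ) : dilate f v k y = f (y - (k : ℝ) • v) + (k : ℝ) • f v := rfl

theorem smul_sub_smul_eq_lineMap {E : Type*} [AddCommGroup E] [Module ℝ E] (v p : E) (k : ℕ) :
    ((k + 1 : ℕ) : ℝ) • p - (k : ℝ) • v = AffineMap.lineMap v p ((k + 1 : ℕ) : ℝ) := by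
  rw [AffineMap.lineMap_apply, vsub_eq_sub, vadd_eq_add, Nat.cast_succ]
  module

theorem dilate_smul (f : (Fin d → ℝ) →ᵃ[ℝ] (Fin e → ℝ)) (v p : Fin d → ℝ) (k : ℕ) :
    dilate f v k (((k + 1 : ℕ) : ℝ) • p) = ((k + 1 : ℕ) : ℝ) • f p := by
  rw [dilate_apply, smul_sub_smul_eq_lineMap, AffineMap.apply_lineMap, ← smul_sub_smul_eq_lineMap,
    sub_add_cancel]

theorem dilate_image_smul (f : (Fin d → ℝ) →ᵃ[ℝ] (Fin e → ℝ)) (v : Fin d → ℝ) (k : ℕ) :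
    dilate f v k '' (((k + 1 : ℕ) : ℝ) • P) = ((k + 1 : ℕ) : ℝ) • (f '' P) := by
  simp only [← Set.image_smul, Set.image_image, dilate_smul]

theorem dilate_leftInverse {f : (Fin d → ℝ) →ᵃ[ℝ] (Fin e → ℝ)} {g : (Fin e → ℝ) →ᵃ[ℝ] (Fin d → ℝ)}
    {v y : Fin d → ℝ} {k : ℕ} (hv : g (f v) = v)
    (hy : g (f (y - (k : ℝ) • v)) = y - (k : ℝ) • v) : dilate g (f v) k (dilate f v k y) = y := by
  rw [dilate_apply, dilate_apply, add_sub_cancel_right, hy, hv, sub_add_cancel]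

theorem sub_smul_mem_affineSpan {v y : Fin d → ℝ} {k : ℕ} (hv : v ∈ affineSpan ℝ P)
    (hy : y ∈ affineSpan ℝ (((k + 1 : ℕ) : ℝ) • P)) : y - (k : ℝ) • v ∈ affineSpan ℝ P := by
  suffices affineSpan ℝ (((k + 1 : ℕ) : ℝ) • P) ≤ (affineSpan ℝ P).comap
      (AffineMap.id ℝ _ - AffineMap.const ℝ _ ((k : ℝ) • v)) from this hy
  refine affineSpan_le.2 ?_
  rintro _ ⟨p, hp, rfl⟩
  change ((k + 1 : ℕ) : ℝ) • p - (k : ℝ) • v ∈ affineSpan ℝ P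
  rw [smul_sub_smul_eq_lineMap]
  exact AffineMap.lineMap_mem _ hv (subset_affineSpan ℝ P hp)

theorem LatticeIso.smul (h : LatticeIso P Q) (hP : IsLatticePolytope P) {r : ℕ} (hr : 0 < r) :
    LatticeIso ((r : ℝ) • P) ((r : ℝ) • Q) := by
  obtain ⟨k, rfl⟩ := Nat.exists_eq_add_one_of_ne_zero hr.ne'
  obtain ⟨v, hv, hvlat⟩ := hP.exists_isLatticePt
  obtain ⟨f, g, rfl, hg, hgf, hfg, hflat, hglat⟩ := h
  have hvP := subset_affineSpan ℝ P hv
  have hfv := map_mem_affineSpan_image f hvP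
  have hfvlat := hflat v hvP hvlat
  refine ⟨dilate f v k, dilate g (f v) k, dilate_image_smul f v k, ?_,
    fun y hy => dilate_leftInverse (hgf v hvP) (hgf _ (sub_smul_mem_affineSpan hvP hy)),
    fun y hy => ?_, fun y hy hylat => ?_, fun y hy hylat => ?_⟩
  · rw [dilate_image_smul, hg]
  · have := dilate_leftInverse (hfg _ hfv) (hfg _ (sub_smul_mem_affineSpan hfv hy))
    rwa [hgf v hvP] at this
  · exact (hflat _ (sub_smul_mem_affineSpan hvP hy) (hylat.sub (hvlat.natCast_smul k))).add
      (hfvlat.natCast_smul k)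
  · exact (hglat _ (sub_smul_mem_affineSpan hfv hy) (hylat.sub (hfvlat.natCast_smul k))).add
      ((hglat _ hfv hfvlat).natCast_smul k)

theorem LatticeIso.polyCodeg_eq (h : LatticeIso P Q) (hP : IsLatticePolytope P) :
    polyCodeg Q = polyCodeg P := by
  have hQ := h.isLatticePolytope hP
  have hiff : ∀ r : ℕ, 0 < r → (IsHollow ((r : ℝ) • Q) ↔ IsHollow ((r : ℝ) • P)) := fun r hr =>
    ⟨(h.symm.smul hQ hr).isHollow (hP.convex.smul _), (h.smul hP hr).isHollow (hQ.convex.smul _)⟩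
  exact congrArg sInf (Set.ext fun r => and_congr_right fun hr => not_congr (hiff r hr))

theorem LatticeIso.isGorenstein (h : LatticeIso P Q) (hP : IsLatticePolytope P)
    (hG : IsGorenstein P) : IsGorenstein Q := by
  obtain ⟨r, hr, hrefl⟩ := hG
  exact ⟨r, hr, (h.smul hP hr).isReflexivePolytope (hP.convex.smul _) hrefl⟩

end LatticeIso

section Cayley

variable {n m N : ℕ}

theorem IsLatticePt.append {x : Fin n → ℝ} {s : Fin m → ℝ} (hx : IsLatticePt x)
    (hs : IsLatticePt s) : IsLatticePt (Fin.append x s) := fun i => by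
  refine Fin.addCases (fun j => ?_) (fun j => ?_) i
  · simpa only [Fin.append_left] using hx j
  · simpa only [Fin.append_right] using hs j

/-- The affine embedding `x ↦ (x, s)`, whose images for `s = e₁, e₂` span a Cayley polytope. -/
def appendAffineMap (s : Fin m → ℝ) : (Fin n → ℝ) →ᵃ[ℝ] (Fin (n + m) → ℝ) where
  toFun x := Fin.append x s
  linear :=
    { toFun := fun x => Fin.append x 0
      map_add' := fun x y => by
        ext i
        refine Fin.addCases (fun j => ?_) (fun j => ?_) i <;> simp
      map_smul' := fun t x => by
        ext i
        refine Fin.addCases (fun j => ?_) (fun j => ?_) i <;> simp }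
  map_vadd' x v := by
    ext i
    refine Fin.addCases (fun j => ?_) (fun j => ?_) i <;> simp

theorem latticeIso_append_image (F : Set (Fin n → ℝ)) {s : Fin m → ℝ} (hs : IsLatticePt s) :
    LatticeIso F ((Fin.append · s) '' F) := by
  let g : (Fin (n + m) → ℝ) →ᵃ[ℝ] (Fin n → ℝ) :=
    (LinearMap.funLeft ℝ ℝ (Fin.castAdd m)).toAffineMap
  have hgf (x : Fin n → ℝ) : g (appendAffineMap s x) = x := funext (Fin.append_left x s)
  refine ⟨appendAffineMap s, g, rfl, ?_, fun x _ => hgf x, fun y hy => ?_,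
    fun x _ hx => hx.append hs, fun y _ hy i => hy _⟩
  · exact Set.LeftInvOn.image_image (f := appendAffineMap s) fun x _ => hgf x
  · change y ∈ affineSpan ℝ (appendAffineMap s '' F) at hy
    rw [← AffineSubspace.map_span] at hy
    obtain ⟨x, -, rfl⟩ := hy
    rw [hgf]

theorem LatticeIso.exists_eq_convexHull_union {P : Set (Fin N → ℝ)} {F G : Set (Fin n → ℝ)}
    (h : LatticeIso P (cayleyTwo F G)) :
    ∃ A B, LatticeIso F A ∧ LatticeIso G B ∧ P = convexHull ℝ (A ∪ B) := by
  obtain ⟨g, rfl, hg⟩ := h.symm.exists_image_eq_and_forall_subset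
  have hlat₁ : IsLatticePt ![(1 : ℝ), 0] := Fin.forall_fin_two.2 ⟨⟨1, by simp⟩, ⟨0, by simp⟩⟩
  have hlat₂ : IsLatticePt ![(0 : ℝ), 1] := Fin.forall_fin_two.2 ⟨⟨0, by simp⟩, ⟨1, by simp⟩⟩
  refine ⟨_, _, (latticeIso_append_image F hlat₁).trans (hg _ ?_),
    (latticeIso_append_image G hlat₂).trans (hg _ ?_), ?_⟩
  · exact Set.subset_union_left.trans (subset_convexHull ℝ _)
  · exact Set.subset_union_right.trans (subset_convexHull ℝ _)
  · rw [← Set.image_union, ← g.image_convexHull, cayleyTwo]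

end Cayley

/-- If a Gorenstein polytope `P` is a Cayley join of lattice polytopes `F` and `G` with
`codeg F + codeg G = codeg P`, then `F` and `G` are Gorenstein polytopes. -/
theorem stmt13 {N n : ℕ} (P : Set (Fin N → ℝ)) (F G : Set (Fin n → ℝ))
    (hP : IsLatticePolytope P) (hF : IsLatticePolytope F) (hG : IsLatticePolytope G)
    (hGor : IsGorenstein P) (hjoin : IsCayleyJoin P F G)
    (hcodeg : polyCodeg F + polyCodeg G = polyCodeg P) :
    IsGorenstein F ∧ IsGorenstein G := by
  obtain ⟨hiso, hdim⟩ := hjoin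
  obtain ⟨A, B, hFA, hGB, rfl⟩ := hiso.exists_eq_convexHull_union
  have hA := hFA.isLatticePolytope hF
  have hB := hGB.isLatticePolytope hG
  rw [← hFA.polyDim_eq, ← hGB.polyDim_eq] at hdim
  rw [← hFA.polyCodeg_eq hF, ← hGB.polyCodeg_eq hG] at hcodeg
  have hGorA : IsGorenstein A := .of_convexHull_union_left hA hB hdim hcodeg hGor
  rw [Set.union_comm] at hdim hcodeg hGor
  rw [add_comm (polyDim A)] at hdim
  rw [add_comm] at hcodeg
  have hGorB : IsGorenstein B := .of_convexHull_union_left hB hA hdim hcodeg hGor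
  exact ⟨hFA.symm.isGorenstein hA hGorA, hGB.symm.isGorenstein hB hGorB⟩
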